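/- Fix p, q ∈ (0,1). Let z and y be the weighted shifts on ℓ²(ℕ) determined by z e_n = √(1 − q^{n+1}) e_{n+1} and y e_n = √(1 − p^{n+1}) e_{n+1}. In T × T (componentwise operations, unit 1 = (1,1)) define A := (1 − z z*, 0), B := (0, 1 − y y*), and R := (z, y). Then A, B, R belong to B̄, A* = A, B* = B, and the following relations hold: R*R = 1 − qA − pB, R R* = 1 − A − B, A R = q R A, B R = p R B, and A B = 0. These are the defining relations of the coordinate *-algebra O(S²_{pq}) of the quantum 2-sphere, realized concretely inside the glued quantum 2-sphere C*-algebra B̄. -/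

import Mathlib

/-!
Everything is read off from the action on the orthonormal basis. The adjoint of a weighted shift
with real weights is the backward weighted shift, so with `w n = √(1 - q ^ (n + 1))` the operator
`1 - z z*` is diagonal with eigenvalues `q ^ n` (`one_sub_mul_star_apply`), and the algebraic
relations reduce to comparing coefficients of basis vectors.

For membership in `B̄`, the matrix units `|e a⟩⟨e b| = S ^ a (1 - S S*) (S ^ b)*` lie in the Toeplitz
algebra and are compact. The same holds for every operator sending `e n` to
`c n • e (n + k)` with `c` absolutely summable, it being a norm-convergent series of matrix units
(`mem_elemental_and_isCompactOperator`). Since `|√(1 - x) - 1| ≤ x` on `[0, 1]`, this applies to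
`z - S` and `y - S`, with `k = 1`, as well as to `1 - z z*` and `1 - y y*`, with `k = 0`.
-/

section WeightedShift

open InnerProductSpace

variable {H : Type*} [NormedAddCommGroup H] [InnerProductSpace ℂ H]

theorem HilbertBasis.clm_ext (e : HilbertBasis ℕ ℂ H) {X Y : H →L[ℂ] H}
    (h : ∀ n, X (e n) = Y (e n)) : X = Y := by
  refine ContinuousLinearMap.ext_on (s := Set.range e) ?_ ?_
  · rw [dense_iff_closure_eq, ← Submodule.topologicalClosure_coe, e.dense_span]
    rfl
  · rintro _ ⟨n, rfl⟩
    exact h n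

theorem HilbertBasis.inner_eq_ite (e : HilbertBasis ℕ ℂ H) (m n : ℕ) :
    inner ℂ (e m) (e n) = if m = n then (1 : ℂ) else 0 :=
  orthonormal_iff_ite.mp e.orthonormal m n

theorem HilbertBasis.ext_inner (e : HilbertBasis ℕ ℂ H) {x y : H}
    (h : ∀ m, inner ℂ (e m) x = inner ℂ (e m) y) : x = y := by
  apply e.repr.injective
  ext m
  simpa only [e.repr_apply_apply] using h m

theorem isCompactOperator_rankOne (x y : H) : IsCompactOperator (rankOne ℂ x y) :=
  ((isCompactOperator_id (E := ℂ)).comp_clm (innerSL ℂ y)).clm_comp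
    (ContinuousLinearMap.toSpanSingleton ℂ x)

variable [CompleteSpace H]

theorem star_shift_zero (e : HilbertBasis ℕ ℂ H) {X : H →L[ℂ] H} {w : ℕ → ℝ}
    (hX : ∀ n, X (e n) = (w n : ℂ) • e (n + 1)) : star X (e 0) = 0 := by
  apply e.ext_inner
  intro m
  rw [ContinuousLinearMap.star_eq_adjoint, ContinuousLinearMap.adjoint_inner_right, hX,
    inner_smul_left, e.inner_eq_ite]
  simp

theorem star_shift_succ (e : HilbertBasis ℕ ℂ H) {X : H →L[ℂ] H} {w : ℕ → ℝ}
    (hX : ∀ n, X (e n) = (w n : ℂ) • e (n + 1)) (n : ℕ) :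
    star X (e (n + 1)) = (w n : ℂ) • e n := by
  apply e.ext_inner
  intro m
  rw [ContinuousLinearMap.star_eq_adjoint, ContinuousLinearMap.adjoint_inner_right, hX,
    inner_smul_left, inner_smul_right, e.inner_eq_ite, e.inner_eq_ite]
  by_cases h : m = n <;> simp [h]

/-- The matrix unit `|e a⟩⟨e b|` equals `S ^ a (1 - S S*) (S ^ b)*`. -/
theorem rankOne_mem_elemental (e : HilbertBasis ℕ ℂ H) {S : H →L[ℂ] H}
    (hS : ∀ n, S (e n) = e (n + 1)) (a b : ℕ) :
    rankOne ℂ (e a) (e b) ∈ StarAlgebra.elemental ℂ S := by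
  have hS' : ∀ n, S (e n) = (((fun _ => 1 : ℕ → ℝ) n : ℝ) : ℂ) • e (n + 1) := by simpa using hS
  have hpow : ∀ n, (S ^ n) (e 0) = e n := by
    intro n
    induction n with
    | zero => simp
    | succ k ih => rw [pow_succ', mul_apply_eq_comp, ih, hS]
  have h0 : rankOne ℂ (e 0) (e 0) = 1 - S * star S := by
    apply e.clm_ext
    intro n
    rw [rankOne_apply, e.inner_eq_ite]
    cases n with
    | zero => simp [star_shift_zero e hS']
    | succ k => simp [star_shift_succ e hS', hS]
  have hab : rankOne ℂ (e a) (e b) = S ^ a * (1 - S * star S) * star (S ^ b) := by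
    rw [← h0, ContinuousLinearMap.mul_def, ContinuousLinearMap.mul_def, comp_rankOne,
      rankOne_comp, ContinuousLinearMap.star_eq_adjoint, ContinuousLinearMap.adjoint_adjoint,
      hpow, hpow]
  have hmem := StarAlgebra.elemental.self_mem ℂ S
  rw [hab]
  exact mul_mem (mul_mem (pow_mem hmem a) (sub_mem (one_mem _) (mul_mem hmem (star_mem hmem))))
    (star_mem (pow_mem hmem b))

/-- A weighted `k`-step shift with absolutely summable weights is the norm limit of finite linear
combinations of matrix units, hence a compact element of the Toeplitz algebra. -/
theorem mem_elemental_and_isCompactOperator (e : HilbertBasis ℕ ℂ H) {S : H →L[ℂ] H}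
    (hS : ∀ n, S (e n) = e (n + 1)) {X : H →L[ℂ] H} {c : ℕ → ℝ} (k : ℕ)
    (hc : Summable fun n => |c n|) (hX : ∀ n, X (e n) = (c n : ℂ) • e (n + k)) :
    X ∈ StarAlgebra.elemental ℂ S ∧ IsCompactOperator X := by
  have hsum : Summable fun n => (c n : ℂ) • rankOne ℂ (e (n + k)) (e n) := by
    apply Summable.of_norm
    simpa [norm_smul, e.orthonormal.1] using hc
  have hXsum : X = ∑' n, (c n : ℂ) • rankOne ℂ (e (n + k)) (e n) := by
    apply e.clm_ext
    intro m
    have hm := hsum.hasSum.mapL (ContinuousLinearMap.apply ℂ H (e m))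
    rw [hX]
    refine HasSum.unique ?_ hm
    convert hasSum_single m ?_ using 1
    · simp [e.orthonormal.1]
    · intro n hn
      simp [e.inner_eq_ite, hn]
  constructor
  · rw [hXsum]
    exact tsum_mem (StarAlgebra.elemental.isClosed ℂ S)
      fun n => SMulMemClass.smul_mem _ (rankOne_mem_elemental e hS _ _)
  · have hcl : IsClosed (compactOperator (RingHom.id ℂ) H H : Set (H →L[ℂ] H)) :=
      isClosed_setOfPred_isCompactOperator
    have : X ∈ compactOperator (RingHom.id ℂ) H H := by
      rw [hXsum]
      exact tsum_mem hcl fun n => SMulMemClass.smul_mem _ (isCompactOperator_rankOne _ _)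
    exact this

theorem sqrt_mul_sqrt_weight {q : ℝ} (hq : q ∈ Set.Ioo (0 : ℝ) 1) (n : ℕ) :
    ((Real.sqrt (1 - q ^ (n + 1)) : ℝ) : ℂ) * ((Real.sqrt (1 - q ^ (n + 1)) : ℝ) : ℂ)
      = 1 - (q : ℂ) ^ (n + 1) := by
  have h : q ^ (n + 1) ≤ 1 := pow_le_one₀ hq.1.le hq.2.le
  rw [← Complex.ofReal_mul, Real.mul_self_sqrt (by linarith)]
  push_cast
  rfl

theorem one_sub_mul_star_apply (e : HilbertBasis ℕ ℂ H) {q : ℝ} (hq : q ∈ Set.Ioo (0 : ℝ) 1)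
    {z : H →L[ℂ] H}
    (hz : ∀ n : ℕ, z (e n) = ((Real.sqrt (1 - q ^ (n + 1)) : ℝ) : ℂ) • e (n + 1)) (n : ℕ) :
    (1 - z * star z) (e n) = (q : ℂ) ^ n • e n := by
  rw [sub_apply, one_apply_eq_self,
    mul_apply_eq_comp]
  cases n with
  | zero => simp [star_shift_zero e hz]
  | succ k =>
    rw [star_shift_succ e hz, map_smul, hz, smul_smul, sqrt_mul_sqrt_weight hq]
    module

theorem star_mul_shift (e : HilbertBasis ℕ ℂ H) {q : ℝ} (hq : q ∈ Set.Ioo (0 : ℝ) 1)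
    {z : H →L[ℂ] H}
    (hz : ∀ n : ℕ, z (e n) = ((Real.sqrt (1 - q ^ (n + 1)) : ℝ) : ℂ) • e (n + 1)) :
    star z * z = 1 - (q : ℂ) • (1 - z * star z) := by
  apply e.clm_ext
  intro n
  rw [sub_apply, smul_apply,
    one_sub_mul_star_apply e hq hz, one_apply_eq_self,
    mul_apply_eq_comp, hz, map_smul, star_shift_succ e hz, smul_smul,
    sqrt_mul_sqrt_weight hq]
  module

theorem one_sub_mul_star_mul_shift (e : HilbertBasis ℕ ℂ H) {q : ℝ}
    (hq : q ∈ Set.Ioo (0 : ℝ) 1) {z : H →L[ℂ] H}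
    (hz : ∀ n : ℕ, z (e n) = ((Real.sqrt (1 - q ^ (n + 1)) : ℝ) : ℂ) • e (n + 1)) :
    (1 - z * star z) * z = (q : ℂ) • (z * (1 - z * star z)) := by
  apply e.clm_ext
  intro n
  rw [smul_apply, mul_apply_eq_comp,
    mul_apply_eq_comp, one_sub_mul_star_apply e hq hz, map_smul, hz, map_smul,
    one_sub_mul_star_apply e hq hz]
  module

theorem shift_sub_mem (e : HilbertBasis ℕ ℂ H) {S : H →L[ℂ] H}
    (hS : ∀ n, S (e n) = e (n + 1)) {q : ℝ} (hq : q ∈ Set.Ioo (0 : ℝ) 1) {z : H →L[ℂ] H}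
    (hz : ∀ n : ℕ, z (e n) = ((Real.sqrt (1 - q ^ (n + 1)) : ℝ) : ℂ) • e (n + 1)) :
    z - S ∈ StarAlgebra.elemental ℂ S ∧ IsCompactOperator ⇑(z - S) := by
  refine mem_elemental_and_isCompactOperator e hS
    (c := fun n => Real.sqrt (1 - q ^ (n + 1)) - 1) 1 ?_ ?_
  · refine Summable.of_nonneg_of_le (fun _ => abs_nonneg _) (fun n => ?_)
      (summable_geometric_of_lt_one hq.1.le hq.2)
    have h1 : q ^ (n + 1) ≤ 1 := pow_le_one₀ hq.1.le hq.2.le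
    have h0 : 0 < q ^ (n + 1) := pow_pos hq.1 _
    have h2 : q ^ (n + 1) ≤ q ^ n := pow_le_pow_of_le_one hq.1.le hq.2.le n.le_succ
    have h3 : Real.sqrt (1 - q ^ (n + 1)) ≤ 1 := Real.sqrt_le_one.mpr (by linarith)
    have h4 : 1 - q ^ (n + 1) ≤ Real.sqrt (1 - q ^ (n + 1)) :=
      Real.le_sqrt_of_sq_le (by nlinarith)
    rw [abs_le]
    constructor <;> linarith
  · intro n
    rw [sub_apply, hz, hS]
    push_cast
    module

theorem shift_mem (e : HilbertBasis ℕ ℂ H) {S : H →L[ℂ] H}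
    (hS : ∀ n, S (e n) = e (n + 1)) {q : ℝ} (hq : q ∈ Set.Ioo (0 : ℝ) 1) {z : H →L[ℂ] H}
    (hz : ∀ n : ℕ, z (e n) = ((Real.sqrt (1 - q ^ (n + 1)) : ℝ) : ℂ) • e (n + 1)) :
    z ∈ StarAlgebra.elemental ℂ S := by
  simpa using add_mem (shift_sub_mem e hS hq hz).1 (StarAlgebra.elemental.self_mem ℂ S)

theorem one_sub_mul_star_mem (e : HilbertBasis ℕ ℂ H) {S : H →L[ℂ] H}
    (hS : ∀ n, S (e n) = e (n + 1)) {q : ℝ} (hq : q ∈ Set.Ioo (0 : ℝ) 1) {z : H →L[ℂ] H}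
    (hz : ∀ n : ℕ, z (e n) = ((Real.sqrt (1 - q ^ (n + 1)) : ℝ) : ℂ) • e (n + 1)) :
    1 - z * star z ∈ StarAlgebra.elemental ℂ S ∧ IsCompactOperator ⇑(1 - z * star z) := by
  refine mem_elemental_and_isCompactOperator e hS (c := fun n => q ^ n) 0 ?_ ?_
  · simpa [abs_of_pos hq.1] using summable_geometric_of_lt_one hq.1.le hq.2
  · intro n
    rw [one_sub_mul_star_apply e hq hz]
    simp

end WeightedShift

/-- With `z`, `y` the weighted shifts `z e_n = √(1-q^{n+1}) e_{n+1}`,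
`y e_n = √(1-p^{n+1}) e_{n+1}` and, in `T × T`, `A = (1 - z z*, 0)`, `B = (0, 1 - y y*)`,
`R = (z, y)`, the elements `A`, `B`, `R` belong to `B̄`, `A* = A`, `B* = B`, and the defining
relations of `O(S²_{pq})` hold: `R*R = 1 - qA - pB`, `R R* = 1 - A - B`, `A R = q R A`,
`B R = p R B`, `A B = 0`. -/
theorem statement6
    {H : Type*} [NormedAddCommGroup H] [InnerProductSpace ℂ H] [CompleteSpace H]
    (e : HilbertBasis ℕ ℂ H) (S : H →L[ℂ] H)
    (hS : ∀ n : ℕ, S (e n) = e (n + 1))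
    (p q : ℝ) (hp : p ∈ Set.Ioo (0 : ℝ) 1) (hq : q ∈ Set.Ioo (0 : ℝ) 1)
    (z y : H →L[ℂ] H)
    (hz : ∀ n : ℕ, z (e n) = ((Real.sqrt (1 - q ^ (n + 1)) : ℝ) : ℂ) • e (n + 1))
    (hy : ∀ n : ℕ, y (e n) = ((Real.sqrt (1 - p ^ (n + 1)) : ℝ) : ℂ) • e (n + 1))
    (Bbar : Set ((H →L[ℂ] H) × (H →L[ℂ] H)))
    (hBbar : Bbar = {x : (H →L[ℂ] H) × (H →L[ℂ] H) |
      x.1 ∈ StarAlgebra.elemental ℂ S ∧ x.2 ∈ StarAlgebra.elemental ℂ S ∧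
        IsCompactOperator ⇑(x.1 - x.2)})
    (A B R : (H →L[ℂ] H) × (H →L[ℂ] H))
    (hA : A = (1 - z * star z, 0)) (hB : B = (0, 1 - y * star y)) (hR : R = (z, y)) :
    (A ∈ Bbar ∧ B ∈ Bbar ∧ R ∈ Bbar) ∧
    star A = A ∧ star B = B ∧
    star R * R = 1 - (q : ℂ) • A - (p : ℂ) • B ∧
    R * star R = 1 - A - B ∧
    A * R = (q : ℂ) • (R * A) ∧
    B * R = (p : ℂ) • (R * B) ∧
    A * B = 0 := by
  subst hBbar hA hB hR
  have hza := one_sub_mul_star_mem e hS hq hz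
  have hyb := one_sub_mul_star_mem e hS hp hy
  refine ⟨⟨⟨hza.1, zero_mem _, ?_⟩, ⟨zero_mem _, hyb.1, ?_⟩,
    ⟨shift_mem e hS hq hz, shift_mem e hS hp hy, ?_⟩⟩, ?_, ?_, ?_, ?_, ?_, ?_, ?_⟩
  · simpa only [sub_zero] using hza.2
  · rw [zero_sub]
    exact hyb.2.neg
  · have hdiff : z - y = (z - S) - (y - S) := by abel
    rw [hdiff]
    exact (shift_sub_mem e hS hq hz).2.sub (shift_sub_mem e hS hp hy).2
  · ext1 <;> simp
  · ext1 <;> simp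
  · ext1
    · simpa using star_mul_shift e hq hz
    · simpa using star_mul_shift e hp hy
  · ext1 <;> simp
  · ext1
    · exact one_sub_mul_star_mul_shift e hq hz
    · simp
  · ext1
    · simp
    · exact one_sub_mul_star_mul_shift e hp hy
  · ext1 <;> simp
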